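/- Let q := 1 / ((log₂ 3)/2 − 1/4). Then for all real x, y ≥ 0, one has (1 + (x + y)² + (xy)²)² ≤ (1 + x^{4/3})³ (1 + y^q)^{4/q}. -/

import Mathlib

lemma aux_k (q y : ℝ) (h1 : 1 < q) (h2 : q < 2) (hy0 : 0 < y) (hy1 : y ≤ 1) :
    q * y ^ (q - 1) + (2 - q) * y ^ q ≤ q * y + (2 - q) := by
  have hanti : AntitoneOn (fun y : ℝ => q * y + (2 - q) - q * y ^ (q - 1) - (2 - q) * y ^ q)
      (Set.Icc y 1) := by
    have hd : ∀ z ∈ Set.Icc y 1, HasDerivAt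
        (fun y : ℝ => q * y + (2 - q) - q * y ^ (q - 1) - (2 - q) * y ^ q)
        (q * 1 - q * ((q - 1) * z ^ (q - 1 - 1)) - (2 - q) * (q * z ^ (q - 1))) z := by
      intro z hz
      have hz0 : z ≠ 0 := (lt_of_lt_of_le hy0 hz.1).ne'
      exact ((((hasDerivAt_id z).const_mul q).add_const (2 - q)).sub
        ((Real.hasDerivAt_rpow_const (Or.inl hz0)).const_mul q)).sub
        ((Real.hasDerivAt_rpow_const (Or.inl hz0)).const_mul (2 - q))
    apply antitoneOn_of_deriv_nonpos (convex_Icc _ _)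
    · intro z hz
      exact (hd z hz).continuousAt.continuousWithinAt
    · intro z hz
      rw [interior_Icc] at hz
      exact (hd z ⟨hz.1.le, hz.2.le⟩).differentiableAt.differentiableWithinAt
    · intro z hz
      rw [interior_Icc] at hz
      rw [(hd z ⟨hz.1.le, hz.2.le⟩).deriv]
      have hz0 : 0 < z := hy0.trans hz.1
      have := Real.geom_mean_le_arith_mean2_weighted (w₁ := q - 1) (w₂ := 2 - q)
        (p₁ := z ^ (q - 1 - 1)) (p₂ := z ^ (q - 1)) (by linarith) (by linarith)
        (by positivity) (by positivity) (by ring)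
      rw [← Real.rpow_mul hz0.le, ← Real.rpow_mul hz0.le, ← Real.rpow_add hz0,
        show (q - 1 - 1) * (q - 1) + (q - 1) * (2 - q) = 0 by ring, Real.rpow_zero] at this
      nlinarith
  have := hanti (Set.left_mem_Icc.2 hy1) (Set.right_mem_Icc.2 hy1) hy1
  simp only [Real.one_rpow] at this
  linarith

lemma case_one (q a y : ℝ) (hq1 : 1.835 ≤ q) (hq2 : q ≤ 1.85)
    (h2 : (2 : ℝ) ^ (4 / q) = 9 / 2) (ha : 0.45 ≤ a) (ha1 : a ≤ 1) (hy : 0 ≤ y) (hy1 : y ≤ 1) :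
    ((1 + a ^ 6) * (1 + y ^ 2) + 2 * a ^ 3 * y) ^ 2 ≤
      (1 + a ^ 4) ^ 3 * (1 + y ^ q) ^ (4 / q) := by
  norm_num at hq1 hq2 ha
  have ha0 : 0 < a := by linarith
  have hq0 : 0 < q := by linarith
  have gpos : ∀ z : ℝ, 0 ≤ z → 0 < (1 + a ^ 6) * (1 + z ^ 2) + 2 * a ^ 3 * z := by
    intro z hz; positivity
  have npos : ∀ z : ℝ, 0 ≤ z → 0 < 1 + z ^ q := by
    intro z hz; positivity
  -- S bound
  have hS : (1 + a ^ 6) * (2 - q) ≤ q * a ^ 3 := by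
    have h3 : 0.091 ≤ a ^ 3 := by
      have : (9/20:ℝ) ^ 3 ≤ a ^ 3 := by gcongr
      norm_num at this ⊢; linarith
    have h4 : a ^ 3 ≤ 1 := pow_le_one₀ ha0.le ha1
    have h5 : 1 + a ^ 6 ≤ 11.1 * a ^ 3 := by
      have : a ^ 6 = (a ^ 3) ^ 2 := by ring
      rw [this]; norm_num at *; nlinarith
    have h6 : (2 - q) * 11.1 ≤ q := by norm_num; linarith
    have : (1 + a ^ 6) * (2 - q) ≤ 11.1 * a ^ 3 * (2 - q) :=
      mul_le_mul_of_nonneg_right h5 (by linarith)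
    nlinarith [mul_le_mul_of_nonneg_right h6 (by positivity : 0 ≤ a ^ 3)]
  have hanti : AntitoneOn (fun z : ℝ => (4 / q) * Real.log (1 + z ^ q)
      - 2 * Real.log ((1 + a ^ 6) * (1 + z ^ 2) + 2 * a ^ 3 * z)) (Set.Icc 0 1) := by
    have hd : ∀ z ∈ Set.Icc (0:ℝ) 1, HasDerivAt (fun z : ℝ => (4 / q) * Real.log (1 + z ^ q)
      - 2 * Real.log ((1 + a ^ 6) * (1 + z ^ 2) + 2 * a ^ 3 * z))
      ((4 / q) * ((q * z ^ (q - 1)) / (1 + z ^ q))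
        - 2 * (((1 + a ^ 6) * (2 * z) + 2 * a ^ 3 * 1) /
          ((1 + a ^ 6) * (1 + z ^ 2) + 2 * a ^ 3 * z))) z := by
      intro z hz
      have e1 : HasDerivAt (fun z : ℝ => 1 + z ^ q) (q * z ^ (q - 1)) z :=
        (Real.hasDerivAt_rpow_const (Or.inr (by linarith))).const_add 1
      have e2 : HasDerivAt (fun z : ℝ => (1 + a ^ 6) * (1 + z ^ 2) + 2 * a ^ 3 * z)
          ((1 + a ^ 6) * (2 * z) + 2 * a ^ 3 * 1) z := by
        have := (((hasDerivAt_pow 2 z).const_add 1).const_mul (1 + a ^ 6)).add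
          ((hasDerivAt_id z).const_mul (2 * a ^ 3))
        rw [show (1 + a ^ 6) * (2 * z) + 2 * a ^ 3 * 1
          = (1 + a ^ 6) * (((2 : ℕ) : ℝ) * z ^ (2 - 1)) + 2 * a ^ 3 * 1 by norm_num]
        exact this
      exact ((e1.log (npos z hz.1).ne').const_mul _).sub ((e2.log (gpos z hz.1).ne').const_mul _)
    apply antitoneOn_of_deriv_nonpos (convex_Icc _ _)
    · intro z hz
      exact (hd z hz).continuousAt.continuousWithinAt
    · intro z hz
      rw [interior_Icc] at hz
      exact (hd z ⟨hz.1.le, hz.2.le⟩).differentiableAt.differentiableWithinAt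
    · intro z hz
      rw [interior_Icc] at hz
      rw [(hd z ⟨hz.1.le, hz.2.le⟩).deriv]
      have hk := aux_k q z (by linarith) (by linarith) hz.1 hz.2.le
      have hg := gpos z hz.1.le
      have hn := npos z hz.1.le
      have hzq : z ^ q = z ^ (q - 1) * z := by
        rw [← Real.rpow_add_one hz.1.ne']; ring_nf
      have hzq1 : z ^ q ≤ 1 := Real.rpow_le_one hz.1.le hz.2.le hq0.le
      have e : (4 / q) * ((q * z ^ (q - 1)) / (1 + z ^ q))
          = 4 * z ^ (q - 1) / (1 + z ^ q) := by field_simp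
      rw [e, sub_nonpos, ← mul_div_assoc, div_le_div_iff₀ hn hg]
      -- key
      have key : (1 + a ^ 6) * (z ^ (q - 1) - z) ≤ a ^ 3 * (1 - z ^ q) := by
        have k1 : q * (z ^ (q - 1) - z) ≤ (2 - q) * (1 - z ^ q) := by linarith
        have k2 := mul_le_mul_of_nonneg_left k1 (by positivity : 0 ≤ 1 + a ^ 6)
        have k3 := mul_le_mul_of_nonneg_right hS (by linarith : 0 ≤ 1 - z ^ q)
        have k4 : q * ((1 + a ^ 6) * (z ^ (q - 1) - z)) ≤ q * (a ^ 3 * (1 - z ^ q)) := by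
          linarith
        exact le_of_mul_le_mul_left k4 hq0
      rw [hzq] at key ⊢
      linarith
  have hle := hanti (⟨hy, hy1⟩ : y ∈ Set.Icc (0:ℝ) 1) (Set.right_mem_Icc.2 zero_le_one) hy1
  simp only [Real.one_rpow] at hle
  have g1 := gpos 1 zero_le_one
  have gy := gpos y hy
  have ny := npos y hy
  set G1 := (1 + a ^ 6) * (1 + 1 ^ 2) + 2 * a ^ 3 * 1 with hG1
  set Gy := (1 + a ^ 6) * (1 + y ^ 2) + 2 * a ^ 3 * y with hGy
  set N := (1 + y ^ q) ^ (4 / q) with hN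
  have hN0 : 0 < N := by positivity
  have hmain : 9 / 2 * Gy ^ 2 ≤ N * G1 ^ 2 := by
    rw [← Real.log_le_log_iff (by positivity) (by positivity), ← h2,
      Real.log_mul (by positivity) (by positivity), Real.log_mul (by positivity) (by positivity),
      Real.log_pow, Real.log_pow, hN, Real.log_rpow ny, Real.log_rpow (by norm_num)]
    norm_num at hle ⊢
    linarith
  have hpoly : G1 ^ 2 ≤ 9 / 2 * (1 + a ^ 4) ^ 3 := by
    have : 9 / 2 * (1 + a ^ 4) ^ 3 - G1 ^ 2 = 1 / 2 * ((1 - a) ^ 4 *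
      (1 + 4 * a + 10 * a ^ 2 + 4 * a ^ 3 - 2 * a ^ 4 + 4 * a ^ 5 + 10 * a ^ 6 + 4 * a ^ 7 + a ^ 8)) := by
      rw [hG1]; ring
    have h : 0 ≤ 1 + 4 * a + 10 * a ^ 2 + 4 * a ^ 3 - 2 * a ^ 4 + 4 * a ^ 5 + 10 * a ^ 6
        + 4 * a ^ 7 + a ^ 8 := by
      have : a ^ 4 ≤ 1 := pow_le_one₀ ha0.le ha1
      have h' : 0 ≤ 4 * a + 4 * a ^ 3 + 4 * a ^ 5 + 10 * a ^ 6 + 4 * a ^ 7 + a ^ 8 := by positivity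
      nlinarith
    have := mul_nonneg (by positivity : 0 ≤ (1 - a) ^ 4) h
    linarith
  nlinarith [mul_le_mul_of_nonneg_left hpoly hN0.le]

lemma N_lower (q y : ℝ) (hq1 : 1.835 ≤ q) (hq2 : q ≤ 1.85)
    (h2 : (2 : ℝ) ^ (4 / q) = 9 / 2) (hy : 0 ≤ y) (hy1 : y ≤ 1) :
    (1 + y ^ 2) ^ 2 * (1 + y ^ 2 * (2 - y) / 8) ≤ (1 + y ^ q) ^ (4 / q) := by
  norm_num at hq1 hq2
  have hq0 : 0 < q := by linarith
  have hY : y ^ 2 * (1 + 0.15 * (1 - y)) ≤ y ^ q := by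
    rcases hy.eq_or_lt with h | h
    · rw [← h, Real.zero_rpow hq0.ne']; norm_num
    · have e : y ^ q = y ^ 2 * y ^ (q - 2) := by
        rw [← Real.rpow_natCast, ← Real.rpow_add h]; congr 1; push_cast; ring
      rw [e]
      gcongr
      rw [Real.rpow_def_of_pos h]
      have h3 := Real.add_one_le_exp (Real.log y * (q - 2))
      have h4 := Real.log_le_sub_one_of_pos h
      norm_num
      nlinarith
  have hY1 : y ^ q ≤ 1 := Real.rpow_le_one hy hy1 hq0.le
  have hY0 : 0 ≤ y ^ q := by positivity
  set Y := y ^ q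
  have hp2 : 2 ≤ 4 / q := by rw [le_div_iff₀ hq0]; linarith
  have hp3 : 4 / q ≤ 3 := by rw [div_le_iff₀ hq0]; linarith
  have hd : (2:ℝ) ^ (4 / q - 2) = 9 / 8 := by
    rw [Real.rpow_sub (by norm_num), h2]; norm_num
  have hc : 1 + Y / 8 ≤ (1 + Y) ^ (4 / q - 2) := by
    have := (Real.concaveOn_rpow (p := 4 / q - 2) (by linarith) (by linarith)).2
      (show (1:ℝ) ∈ Set.Ici 0 by simp) (show (2:ℝ) ∈ Set.Ici 0 by simp)
      (show 0 ≤ 1 - Y by linarith) hY0 (by ring)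
    simp only [smul_eq_mul, Real.one_rpow, hd] at this
    rw [show (1 - Y) * 1 + Y * 2 = 1 + Y by ring] at this
    linarith
  have hsplit : (1 + Y) ^ (4 / q) = (1 + Y) ^ 2 * (1 + Y) ^ (4 / q - 2) := by
    rw [← Real.rpow_natCast, ← Real.rpow_add (by linarith)]; congr 1; push_cast; ring
  rw [hsplit]
  have hw0 : 0 ≤ y ^ 2 * (1 + 0.15 * (1 - y)) := by
    have : 0 ≤ 1 - y := by linarith
    positivity
  set w := y ^ 2 * (1 + 0.15 * (1 - y)) with hw
  calc (1 + y ^ 2) ^ 2 * (1 + y ^ 2 * (2 - y) / 8) ≤ (1 + w) ^ 2 * (1 + w / 8) := by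
        set e := 0.15 * y ^ 2 * (1 - y) with he
        set v := y ^ 2 with hv
        have hv0 : 0 ≤ v := by positivity
        have hv1 : v ≤ 1 := pow_le_one₀ hy hy1
        have he0 : 0 ≤ e := by have : 0 ≤ 1 - y := by linarith
                               positivity
        have h1 : w = v + e := by rw [hw, he]; ring
        have h2 : v * (2 - y) / 8 = v / 8 + e / 1.2 := by rw [he]; ring
        rw [h1, h2]
        have t : (1 + (v + e)) ^ 2 * (1 + (v + e) / 8) - (1 + v) ^ 2 * (1 + (v / 8 + e / 1.2))
          = (1 + v) * e * (2 * (1 + v / 8 + e / 8) + (1 + v) / 8 - (1 + v) / 1.2)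
            + e ^ 2 * (1 + v / 8 + e / 8) := by ring
        have t2 : 0 ≤ 2 * (1 + v / 8 + e / 8) + (1 + v) / 8 - (1 + v) / 1.2 := by
          norm_num; linarith
        have : 0 ≤ (1 + v) * e * (2 * (1 + v / 8 + e / 8) + (1 + v) / 8 - (1 + v) / 1.2)
            + e ^ 2 * (1 + v / 8 + e / 8) := by positivity
        linarith
    _ ≤ (1 + Y) ^ 2 * (1 + Y / 8) := by gcongr
    _ ≤ _ := by gcongr

lemma poly_small (a y : ℝ) (ha0 : 0 ≤ a) (ha : a ≤ 0.45) (hy : 0 ≤ y) (hy1 : y ≤ 1) :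
    ((1 + a ^ 6) * (1 + y ^ 2) + 2 * a ^ 3 * y) ^ 2 ≤
      (1 + a ^ 4) ^ 3 * ((1 + y ^ 2) ^ 2 * (1 + y ^ 2 * (2 - y) / 8)) := by
  norm_num at ha
  have hv : 0 < 1 + y ^ 2 := by positivity
  obtain ⟨c, hc⟩ : ∃ c, c = y / (1 + y ^ 2) := ⟨_, rfl⟩
  have hcy : y = c * (1 + y ^ 2) := by rw [hc]; field_simp
  have hc0 : 0 ≤ c := by rw [hc]; positivity
  obtain ⟨D, hD⟩ : ∃ D, D = y ^ 2 * (2 - y) / 8 := ⟨_, rfl⟩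
  have hD0 : 0 ≤ D := by
    rw [hD]; have : 0 ≤ 2 - y := by linarith
    positivity
  have hc2 : c ≤ 1 / 2 := by
    rw [hc, div_le_iff₀ hv]; nlinarith [sq_nonneg (y - 1)]
  have hcley : c ≤ y := by
    rw [hc, div_le_iff₀ hv]; nlinarith [mul_nonneg hy (sq_nonneg y)]
  -- c ^ 4 ≤ 0.89 ^ 3 * D
  have hcD : c ^ 4 ≤ 0.704 * D := by
    rw [hc, hD, div_pow, div_le_iff₀ (by positivity)]
    have : y ^ 2 ≤ 0.088 * (2 - y) * (1 + y ^ 2) ^ 4 := by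
      have h1 : (1 + y ^ 2) ^ 4 ≥ 1 + 4 * y ^ 2 + 6 * y ^ 4 + 4 * y ^ 6 := by
        nlinarith [sq_nonneg (y ^ 4)]
      have h2 : y ^ 2 ≤ 0.088 * (2 - y) * (1 + 4 * y ^ 2 + 6 * y ^ 4 + 4 * y ^ 6) := by
        norm_num
        nlinarith [sq_nonneg (y ^ 2 - 1 / 3), sq_nonneg (y - 3 / 5), sq_nonneg (y * (y - 3 / 5)),
          sq_nonneg (y ^ 2 * (y - 3 / 5)), mul_nonneg hy (sub_nonneg.2 hy1),
          mul_nonneg (sub_nonneg.2 hy1) (sq_nonneg (y ^ 3)),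
          mul_nonneg (sub_nonneg.2 hy1) (sq_nonneg (y ^ 2)),
          mul_nonneg (sub_nonneg.2 hy1) (sq_nonneg y)]
      have h3 : 0 ≤ 0.088 * (2 - y) := by norm_num; linarith
      exact h2.trans (mul_le_mul_of_nonneg_left h1 h3)
    nlinarith [mul_le_mul_of_nonneg_left this (sq_nonneg y)]
  -- kappa bound
  have hkap : 0.81 * c ^ 2 + 0.074 * c ≤ 0.048 + 3 * D := by
    have h1 : 0.81 * y ^ 2 + 0.074 * y * (1 + y ^ 2)
        ≤ (0.048 + 3 * D) * (1 + y ^ 2) ^ 2 := by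
      rw [hD]
      norm_num
      nlinarith [sq_nonneg (y - 2 / 5), sq_nonneg (y * (y - 2 / 5)),
          sq_nonneg (y ^ 2 * (y - 2 / 5)), mul_nonneg hy (sub_nonneg.2 hy1),
          mul_nonneg (sub_nonneg.2 hy1) (sq_nonneg (y ^ 3)),
          mul_nonneg (sub_nonneg.2 hy1) (sq_nonneg (y ^ 2)),
          mul_nonneg (sub_nonneg.2 hy1) (sq_nonneg y), pow_nonneg hy 3, pow_nonneg hy 5]
    have h2 : 0.81 * c ^ 2 + 0.074 * c
        = (0.81 * y ^ 2 + 0.074 * y * (1 + y ^ 2)) / (1 + y ^ 2) ^ 2 := by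
      rw [hc]; field_simp
    rw [h2, div_le_iff₀ (by positivity)]
    exact h1
  -- powers of a
  have ht : a ^ 2 ≤ 0.2025 := by norm_num; nlinarith
  have ha5 : a ^ 5 ≤ 0.0185 := by
    have : a ^ 5 ≤ (9/20:ℝ) ^ 5 := by gcongr
    norm_num at this ⊢; linarith
  have hfac : 2 * a ^ 2 - 3 * a ^ 4 + 4 * a ^ 2 * c ^ 2 + 4 * a ^ 5 * c ≤ 0.33 + 3 * D := by
    have e1 : 2 * a ^ 2 - 3 * a ^ 4 ≤ 0.282 := by
      have : a ^ 4 = (a ^ 2) ^ 2 := by ring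
      rw [this]; norm_num at ht ⊢; nlinarith
    have e2 : a ^ 2 * c ^ 2 ≤ 0.2025 * c ^ 2 := by gcongr
    have e3 : a ^ 5 * c ≤ 0.0185 * c := by gcongr
    norm_num at *; linarith
  have hyoung : 4 * a ^ 3 * c ≤ 2.67 * a ^ 4 + D := by
    have h1 : 0 ≤ 3 * (0.89 * a) ^ 4 + c ^ 4 - 4 * (0.89 * a) ^ 3 * c := by
      have : 3 * (0.89 * a) ^ 4 + c ^ 4 - 4 * (0.89 * a) ^ 3 * c =
        (0.89 * a - c) ^ 2 * (2 * (0.89 * a) ^ 2 + (0.89 * a + c) ^ 2) := by ring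
      rw [this]; positivity
    norm_num at *
    nlinarith
  have hfin : (1 + a ^ 6 + 2 * a ^ 3 * c) ^ 2 ≤ (1 + a ^ 4) ^ 3 * (1 + D) := by
    have h4 := mul_le_mul_of_nonneg_left hfac (by positivity : 0 ≤ a ^ 4)
    have h5 : 0 ≤ D * (3 * a ^ 8 + a ^ 12) := by positivity
    norm_num at *
    nlinarith
  have e : (1 + a ^ 6) * (1 + y ^ 2) + 2 * a ^ 3 * y
      = (1 + y ^ 2) * (1 + a ^ 6 + 2 * a ^ 3 * c) := by
    have : 2 * a ^ 3 * y = 2 * a ^ 3 * (c * (1 + y ^ 2)) := by rw [← hcy]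
    rw [this]; ring
  rw [e, ← hD, mul_pow]
  nlinarith [mul_le_mul_of_nonneg_left hfin (by positivity : 0 ≤ (1 + y ^ 2) ^ 2)]

lemma unit_case (q a y : ℝ) (hq1 : 1.835 ≤ q) (hq2 : q ≤ 1.85)
    (h2 : (2 : ℝ) ^ (4 / q) = 9 / 2) (ha : 0 ≤ a) (ha1 : a ≤ 1) (hy : 0 ≤ y) (hy1 : y ≤ 1) :
    ((1 + a ^ 6) * (1 + y ^ 2) + 2 * a ^ 3 * y) ^ 2 ≤
      (1 + a ^ 4) ^ 3 * (1 + y ^ q) ^ (4 / q) := by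
  rcases le_total a 0.45 with h | h
  · exact (poly_small a y ha h hy hy1).trans
      (mul_le_mul_of_nonneg_left (N_lower q y hq1 hq2 h2 hy hy1) (by positivity))
  · exact case_one q a y hq1 hq2 h2 h ha1 hy hy1

lemma a_case (q a y : ℝ) (hq1 : 1.835 ≤ q) (hq2 : q ≤ 1.85)
    (h2 : (2 : ℝ) ^ (4 / q) = 9 / 2) (ha : 0 ≤ a) (hy : 0 ≤ y) (hy1 : y ≤ 1) :
    ((1 + a ^ 6) * (1 + y ^ 2) + 2 * a ^ 3 * y) ^ 2 ≤
      (1 + a ^ 4) ^ 3 * (1 + y ^ q) ^ (4 / q) := by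
  rcases le_total a 1 with h | h
  · exact unit_case q a y hq1 hq2 h2 ha h hy hy1
  · have ha0 : 0 < a := by linarith
    have := unit_case q a⁻¹ y hq1 hq2 h2 (by positivity) (inv_le_one_of_one_le₀ h) hy hy1
    have h3 := mul_le_mul_of_nonneg_left this (by positivity : 0 ≤ a ^ 12)
    have e1 : a ^ 12 * ((1 + a⁻¹ ^ 6) * (1 + y ^ 2) + 2 * a⁻¹ ^ 3 * y) ^ 2 =
      ((1 + a ^ 6) * (1 + y ^ 2) + 2 * a ^ 3 * y) ^ 2 := by
      field_simp; ring
    have e2 : a ^ 12 * (1 + a⁻¹ ^ 4) ^ 3 = (1 + a ^ 4) ^ 3 := by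
      field_simp; ring
    rwa [e1, ← mul_assoc, e2] at h3

lemma full_case (q a y : ℝ) (hq1 : 1.835 ≤ q) (hq2 : q ≤ 1.85)
    (h2 : (2 : ℝ) ^ (4 / q) = 9 / 2) (ha : 0 ≤ a) (hy : 0 ≤ y) :
    ((1 + a ^ 6) * (1 + y ^ 2) + 2 * a ^ 3 * y) ^ 2 ≤
      (1 + a ^ 4) ^ 3 * (1 + y ^ q) ^ (4 / q) := by
  rcases le_total y 1 with h | h
  · exact a_case q a y hq1 hq2 h2 ha hy h
  · have hy0 : 0 < y := by linarith
    have hq0 : 0 < q := by norm_num at hq1; linarith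
    have := a_case q a y⁻¹ hq1 hq2 h2 ha (by positivity) (inv_le_one_of_one_le₀ h)
    have h3 := mul_le_mul_of_nonneg_left this (by positivity : 0 ≤ y ^ 4)
    have e1 : y ^ 4 * ((1 + a ^ 6) * (1 + y⁻¹ ^ 2) + 2 * a ^ 3 * y⁻¹) ^ 2 =
      ((1 + a ^ 6) * (1 + y ^ 2) + 2 * a ^ 3 * y) ^ 2 := by
      field_simp; ring
    have e2 : y ^ 4 * (1 + y⁻¹ ^ q) ^ (4 / q) = (1 + y ^ q) ^ (4 / q) := by
      have : y ^ 4 = (y ^ q) ^ (4 / q) := by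
        rw [← Real.rpow_mul hy, mul_div_cancel₀ _ hq0.ne']; norm_cast
      rw [this, ← Real.mul_rpow (by positivity) (by positivity), Real.inv_rpow hy]
      congr 1
      have : 0 < y ^ q := by positivity
      field_simp; ring
    rwa [e1, mul_left_comm, e2] at h3

theorem numerical_r_two_endpoint (x y : ℝ) (hx : 0 ≤ x) (hy : 0 ≤ y) :
    (1 + (x + y) ^ 2 + (x * y) ^ 2) ^ 2 ≤
      (1 + x ^ ((4 : ℝ) / 3)) ^ 3 *
        (1 + y ^ (1 / (Real.logb 2 3 / 2 - 1 / 4))) ^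
          ((4 : ℝ) / (1 / (Real.logb 2 3 / 2 - 1 / 4))) := by
  have hL : (2:ℝ) ^ Real.logb 2 3 = 3 := Real.rpow_logb (by norm_num) (by norm_num) (by norm_num)
  set L := Real.logb 2 3 with hLdef
  have hl1 : 19 / 12 ≤ L := by
    rw [hLdef, Real.le_logb_iff_rpow_le (by norm_num) (by norm_num)]
    rw [← Real.rpow_le_rpow_iff (z := 12) (by positivity) (by norm_num) (by norm_num),
      ← Real.rpow_mul (by norm_num)]
    norm_num
  have hl2 : L ≤ 65 / 41 := by
    rw [hLdef, Real.logb_le_iff_le_rpow (by norm_num) (by norm_num)]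
    rw [← Real.rpow_le_rpow_iff (z := 41) (by norm_num) (by positivity) (by norm_num),
      ← Real.rpow_mul (by norm_num)]
    norm_num
  have hpos : 0 < L / 2 - 1 / 4 := by linarith
  have h2 : (2:ℝ) ^ (4 / (1 / (L / 2 - 1 / 4))) = 9 / 2 := by
    rw [show 4 / (1 / (L / 2 - 1 / 4)) = L + L - 1 by field_simp; ring,
      Real.rpow_sub (by norm_num), Real.rpow_add (by norm_num), hL]
    norm_num
  have hq1 : 1.835 ≤ 1 / (L / 2 - 1 / 4) := by
    rw [le_div_iff₀ hpos]; norm_num; linarith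
  have hq2 : 1 / (L / 2 - 1 / 4) ≤ 1.85 := by
    rw [div_le_iff₀ hpos]; norm_num; linarith
  have := full_case _ (x ^ ((1:ℝ) / 3)) y hq1 hq2 h2 (by positivity) hy
  have e3 : (x ^ ((1:ℝ) / 3)) ^ 3 = x := by
    rw [← Real.rpow_natCast, ← Real.rpow_mul hx]; norm_num
  have e6 : (x ^ ((1:ℝ) / 3)) ^ 6 = x ^ 2 := by
    rw [show (x ^ ((1:ℝ) / 3)) ^ 6 = ((x ^ ((1:ℝ) / 3)) ^ 3) ^ 2 by ring, e3]
  have e4 : (x ^ ((1:ℝ) / 3)) ^ 4 = x ^ ((4:ℝ) / 3) := by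
    rw [← Real.rpow_natCast, ← Real.rpow_mul hx]; norm_num
  rw [e3, e4, e6] at this
  convert this using 1
  ring
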